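/- (Kempe's theorem, unit weight case.) Let k be a field of characteristic 0 and let n be even. For every integer m ≥ 1, every element of R_{(m,m,…,m)} is a k-linear combination of products f_1·f_2⋯f_m with each factor f_j ∈ R_{(1,1,…,1)}. In other words, the graded ring of SL₂(k)-invariants ⊕_{m≥0} R_{(m,…,m)} is generated in degree 1. -/

import Mathlib

/-!
The proof has two halves.

*Invariants are combinations of graph monomials* (`Rv_le_span`). An invariant `f` of multidegree
`(m, …, m)` has the same degree `N` in the `x_i` as in the `y_i` (invariance under the torus) and is
killed by `∑ x_i ∂/∂y_i` (invariance under unipotent matrices, differentiated). For such `f`,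
Capelli's identity reads `∑_{i,j} [ij] Ω_{ij} f = 2N(N+1) f`, where `Ω_{ij}` is Cayley's operator.
Since `Ω_{ij} f` is again of this kind, with `N` lowered by one, induction on `N` writes `f` as a
combination of products of brackets; characteristic `0` is what allows the division by `2N(N+1)`.
Projecting to the multidegree `(m, …, m)` leaves only `m`-regular graphs.

*Graph monomials of regular graphs are combinations of products of perfect matchings.* Split the
`n = r + r` vertices into two halves. Regularity forces as many edges inside the first half as
inside the second, and the Plücker relation trades one edge of each kind for two edges between the
halves, so bipartite regular graphs suffice (`mem_span_bipartite`). By Hall's marriage theorem such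
a graph contains a perfect matching, and removing it lowers the degree by one
(`bipartite_eq_prod`). The monomial of a perfect matching is an invariant of multidegree
`(1, …, 1)`.
-/

open MvPolynomial

/-- The polynomial ring `A = k[x_1, y_1, …, x_n, y_n]`: variable `(i, 0)` is `x_i`
and `(i, 1)` is `y_i`. -/
abbrev PtRing (k : Type) [CommRing k] (n : ℕ) := MvPolynomial (Fin n × Fin 2) k

/-- The bracket `[ab] = x_a y_b − x_b y_a`. -/
noncomputable def bracket (k : Type) [CommRing k] (n : ℕ) (a b : Fin n) : PtRing k n :=
  X (a, 0) * X (b, 1) - X (b, 0) * X (a, 1)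

/-- The graph monomial `m_Γ = ∏_{(a,b) ∈ Γ} [ab]` of a directed graph `Γ`,
viewed as a multiset of directed edges. -/
noncomputable def graphMonomial (k : Type) [CommRing k] (n : ℕ)
    (Γ : Multiset (Fin n × Fin n)) : PtRing k n :=
  (Γ.map fun e => bracket k n e.1 e.2).prod

/-- The `k`-algebra endomorphism of `A` induced by a `2×2` matrix `g = ((p,q),(r,s))`:
`x_i ↦ p·x_i + r·y_i` and `y_i ↦ q·x_i + s·y_i`. -/
noncomputable def subst (k : Type) [CommRing k] (n : ℕ) (g : Matrix (Fin 2) (Fin 2) k) :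
    PtRing k n →ₐ[k] PtRing k n :=
  aeval fun p =>
    if p.2 = 0 then C (g 0 0) * X (p.1, 0) + C (g 1 0) * X (p.1, 1)
    else C (g 0 1) * X (p.1, 0) + C (g 1 1) * X (p.1, 1)

/-- The valence vector of a directed graph: the `i`-th entry is the number of edges
(with multiplicity) having `i` as an endpoint. -/
def valence (n : ℕ) (Γ : Multiset (Fin n × Fin n)) : Fin n → ℕ :=
  fun i => (Γ.map Prod.fst).count i + (Γ.map Prod.snd).count i

/-- `R_v`: the space of `SL₂(k)`-invariant multihomogeneous polynomials of multidegree `v`. -/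
noncomputable def Rv (k : Type) [CommRing k] (n : ℕ) (v : Fin n → ℕ) :
    Submodule k (PtRing k n) :=
  (⨅ g : Matrix.SpecialLinearGroup (Fin 2) k,
      LinearMap.ker ((subst k n (g : Matrix (Fin 2) (Fin 2) k)).toLinearMap
        - (LinearMap.id : PtRing k n →ₗ[k] PtRing k n))) ⊓
  weightedHomogeneousSubmodule k (fun p : Fin n × Fin 2 => Finsupp.single p.1 1)
    (Finsupp.equivFunOnFinite.symm v)

/-! ### Capelli's identity -/

section FirstFundamentalTheorem

variable {k : Type} [Field k] {n : ℕ}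

lemma pderiv_pderiv_comm (p q : Fin n × Fin 2) (f : PtRing k n) :
    pderiv p (pderiv q f) = pderiv q (pderiv p f) := by
  have h : ⁅(pderiv p : Derivation k (PtRing k n) (PtRing k n)),
      (pderiv q : Derivation k (PtRing k n) (PtRing k n))⁆ = 0 := by
    apply MvPolynomial.derivation_ext
    intro i
    rw [Derivation.commutator_apply]
    simp only [pderiv_X, Pi.single_apply]
    split_ifs <;> simp
  have := congrArg (fun D => D f) h
  rw [Derivation.commutator_apply] at this
  exact sub_eq_zero.mp this

/-- The raising operator `∑ x_i ∂/∂y_i` of `sl₂` acting on the polynomial ring. -/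
noncomputable def raising (f : PtRing k n) : PtRing k n :=
  ∑ i, X (i, 0) * pderiv (i, 1) f

/-- Cayley's operator `Ω_{ij} = ∂²/∂x_i∂y_j − ∂²/∂x_j∂y_i`. -/
noncomputable def omegaOp (i j : Fin n) (f : PtRing k n) : PtRing k n :=
  pderiv (i, 0) (pderiv (j, 1) f) - pderiv (j, 0) (pderiv (i, 1) f)

lemma pderiv_x_sum_x_mul (i : Fin n) (g : Fin n → PtRing k n) :
    pderiv (i, 0) (∑ j, X (j, 0) * g j) = g i + ∑ j, X (j, 0) * pderiv (i, 0) (g j) := by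
  simp only [map_sum, Derivation.leibniz, pderiv_X, smul_eq_mul, Finset.sum_add_distrib]
  rw [add_comm]
  congr 1
  rw [Finset.sum_eq_single i] <;> simp +contextual

lemma pderiv_x_sum_y_mul (i : Fin n) (g : Fin n → PtRing k n) :
    pderiv (i, 0) (∑ j, X (j, 1) * g j) = ∑ j, X (j, 1) * pderiv (i, 0) (g j) := by
  simp [map_sum, Derivation.leibniz, pderiv_X]

lemma pderiv_y_sum_x_mul (i : Fin n) (g : Fin n → PtRing k n) :
    pderiv (i, 1) (∑ j, X (j, 0) * g j) = ∑ j, X (j, 0) * pderiv (i, 1) (g j) := by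
  simp [map_sum, Derivation.leibniz, pderiv_X]

lemma raising_omegaOp (i j : Fin n) {f : PtRing k n} (hf : raising f = 0) :
    raising (omegaOp i j f) = 0 := by
  have key (a b : Fin n) :
      raising (pderiv (a, 0) (pderiv (b, 1) f)) = - pderiv (b, 1) (pderiv (a, 1) f) := by
    have h := congrArg (fun g => pderiv (a, 0) (pderiv (b, 1) g)) hf
    simp only [raising, map_zero] at h
    rw [pderiv_y_sum_x_mul, pderiv_x_sum_x_mul] at h
    rw [← eq_neg_of_add_eq_zero_right h, raising]
    refine Finset.sum_congr rfl fun l _ => ?_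
    rw [pderiv_pderiv_comm (l, 1) (a, 0), pderiv_pderiv_comm (l, 1) (b, 1)]
  have hsub : raising (omegaOp i j f) = raising (pderiv (i, 0) (pderiv (j, 1) f))
      - raising (pderiv (j, 0) (pderiv (i, 1) f)) := by
    simp [raising, omegaOp, mul_sub, Finset.sum_sub_distrib]
  rw [hsub, key, key, pderiv_pderiv_comm (i, 1)]
  simp

/-- The weight counting the degree in the variables `x_i` (for `c = 0`) or `y_i` (for `c = 1`). -/
def colWeight (n : ℕ) (c : Fin 2) : Fin n × Fin 2 → ℕ := fun p => if p.2 = c then 1 else 0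

lemma weight_colWeight (c : Fin 2) (d : Fin n × Fin 2 →₀ ℕ) :
    Finsupp.weight (colWeight n c) d = ∑ i, d (i, c) := by
  rw [Finsupp.weight_apply, Finsupp.sum_fintype _ _ (by simp), Fintype.sum_prod_type]
  refine Finset.sum_congr rfl fun i _ => ?_
  simp [colWeight]

lemma euler_col {f : PtRing k n} {N : ℕ} (c : Fin 2)
    (h : f.IsWeightedHomogeneous (colWeight n c) N) :
    ∑ i, X (i, c) * pderiv (i, c) f = (N : PtRing k n) * f := by
  have := h.sum_weight_X_mul_pderiv
  rw [nsmul_eq_mul] at this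
  rw [← this, Fintype.sum_prod_type]
  refine Finset.sum_congr rfl fun i _ => ?_
  simp [colWeight]

/-- Capelli's identity, on a polynomial of degree `N` both in the `x_i` and in the `y_i` that is
killed by the raising operator. -/
lemma capelli {f : PtRing k n} {N : ℕ} (hx : f.IsWeightedHomogeneous (colWeight n 0) N)
    (hy : f.IsWeightedHomogeneous (colWeight n 1) N) (hE : raising f = 0) :
    ∑ i, ∑ j, bracket k n i j * omegaOp i j f = (2 * (N * (N + 1)) : PtRing k n) * f := by
  have ex := euler_col 0 hx
  have ey := euler_col 1 hy
  have h1 : ∑ i, ∑ j, X (i, 0) * (X (j, 1) * pderiv (i, 0) (pderiv (j, 1) f))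
      = (N * N : PtRing k n) * f := by
    rw [mul_assoc, ← ex, Finset.mul_sum]
    refine Finset.sum_congr rfl fun i _ => ?_
    have := congrArg (pderiv (i, 0)) ey
    rw [pderiv_x_sum_y_mul] at this
    rw [← Finset.mul_sum, this]
    simp
    ring
  have h2 : ∑ i, ∑ j, X (i, 1) * (X (j, 0) * pderiv (i, 0) (pderiv (j, 1) f))
      = - ((N : PtRing k n) * f) := by
    rw [← ey, ← Finset.sum_neg_distrib]
    refine Finset.sum_congr rfl fun i _ => ?_
    have := congrArg (pderiv (i, 0)) hE
    rw [raising, pderiv_x_sum_x_mul, map_zero, add_comm] at this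
    rw [← Finset.mul_sum, eq_neg_of_add_eq_zero_left this]
    ring
  have h3 : ∑ i, ∑ j, bracket k n i j * pderiv (i, 0) (pderiv (j, 1) f)
      = (N * (N + 1) : PtRing k n) * f := by
    have : (N * (N + 1) : PtRing k n) * f = (N * N : PtRing k n) * f - - (N * f) := by ring
    rw [this, ← h1, ← h2, ← Finset.sum_sub_distrib]
    refine Finset.sum_congr rfl fun i _ => ?_
    rw [← Finset.sum_sub_distrib]
    refine Finset.sum_congr rfl fun j _ => ?_
    rw [bracket]; ring
  have h4 : ∑ i, ∑ j, bracket k n i j * pderiv (j, 0) (pderiv (i, 1) f)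
      = - ((N * (N + 1) : PtRing k n) * f) := by
    rw [← h3, Finset.sum_comm, ← Finset.sum_neg_distrib]
    refine Finset.sum_congr rfl fun i _ => ?_
    rw [← Finset.sum_neg_distrib]
    refine Finset.sum_congr rfl fun j _ => ?_
    rw [bracket, bracket]; ring
  simp only [omegaOp, mul_sub, Finset.sum_sub_distrib]
  rw [h3, h4]; ring

lemma omegaOp_homogeneous_x {f : PtRing k n} {N : ℕ} (i j : Fin n)
    (h : f.IsWeightedHomogeneous (colWeight n 0) (N + 1)) :
    (omegaOp i j f).IsWeightedHomogeneous (colWeight n 0) N := by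
  have key (a b : Fin n) :
      (pderiv (a, 0) (pderiv (b, 1) f)).IsWeightedHomogeneous (colWeight n 0) N :=
    (h.pderiv (n' := N + 1) (by simp [colWeight])).pderiv (by simp [colWeight])
  exact (key i j).sub (key j i)

lemma omegaOp_homogeneous_y {f : PtRing k n} {N : ℕ} (i j : Fin n)
    (h : f.IsWeightedHomogeneous (colWeight n 1) (N + 1)) :
    (omegaOp i j f).IsWeightedHomogeneous (colWeight n 1) N := by
  have key (a b : Fin n) :
      (pderiv (a, 0) (pderiv (b, 1) f)).IsWeightedHomogeneous (colWeight n 1) N :=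
    (h.pderiv (n' := N) (by simp [colWeight])).pderiv (by simp [colWeight])
  exact (key i j).sub (key j i)

/-- By Capelli's identity `f` is a combination of the `[ij] Ω_{ij} f`, and `Ω_{ij}` preserves the
hypotheses while lowering `N`. -/
lemma mem_span_graphMonomial [CharZero k] (N : ℕ) : ∀ f : PtRing k n,
    f.IsWeightedHomogeneous (colWeight n 0) N → f.IsWeightedHomogeneous (colWeight n 1) N →
    raising f = 0 → f ∈ Submodule.span k (Set.range (graphMonomial k n)) := by
  induction N with
  | zero =>
    intro f hx hy _
    have hf : f = (coeff 0 f) • graphMonomial k n 0 := by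
      rw [graphMonomial, Multiset.map_zero, Multiset.prod_zero, smul_eq_C_mul, mul_one]
      ext d
      rw [coeff_C]
      split_ifs with hd
      · rw [hd]
      · by_contra hc
        apply hd
        have h0 := hx hc
        have h1 := hy hc
        rw [weight_colWeight, Finset.sum_eq_zero_iff] at h0 h1
        ext ⟨i, c⟩
        fin_cases c
        · exact (h0 i (Finset.mem_univ i)).symm
        · exact (h1 i (Finset.mem_univ i)).symm
    rw [hf]
    exact Submodule.smul_mem _ _ (Submodule.subset_span ⟨0, rfl⟩)
  | succ N ih =>
    intro f hx hy hE
    have hcap := capelli hx hy hE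
    have hN : (2 * ((N + 1 : ℕ) * ((N + 1 : ℕ) + 1)) : k) ≠ 0 := by
      exact_mod_cast (by positivity : 2 * ((N + 1) * ((N + 1) + 1)) ≠ 0)
    have hf : f = (2 * ((N + 1 : ℕ) * ((N + 1 : ℕ) + 1)) : k)⁻¹ •
        ∑ i, ∑ j, bracket k n i j * omegaOp i j f := by
      rw [hcap, eq_inv_smul_iff₀ hN, smul_eq_C_mul]
      simp only [map_mul, map_add, map_natCast, map_one, map_ofNat]
    rw [hf]
    refine Submodule.smul_mem _ _ (Submodule.sum_mem _ fun i _ => Submodule.sum_mem _ fun j _ => ?_)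
    have := ih _ (omegaOp_homogeneous_x i j hx) (omegaOp_homogeneous_y i j hy)
      (raising_omegaOp i j hE)
    refine Submodule.span_induction ?_ ?_ ?_ ?_ this
    · rintro _ ⟨Γ, rfl⟩
      exact Submodule.subset_span ⟨(i, j) ::ₘ Γ, by simp [graphMonomial]⟩
    · simp
    · intro a b _ _ ha hb
      rw [mul_add]; exact Submodule.add_mem _ ha hb
    · intro c a _ ha
      rw [mul_smul_comm]; exact Submodule.smul_mem _ _ ha

end FirstFundamentalTheorem

/-! ### Invariants and graph monomials -/

section Invariants

variable {k : Type} [Field k] {n : ℕ}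

lemma mem_Rv_iff {v : Fin n → ℕ} {f : PtRing k n} : f ∈ Rv k n v ↔
    (∀ g : Matrix.SpecialLinearGroup (Fin 2) k,
      subst k n (g : Matrix (Fin 2) (Fin 2) k) f = f) ∧
    f.IsWeightedHomogeneous (fun p : Fin n × Fin 2 => Finsupp.single p.1 1)
      (Finsupp.equivFunOnFinite.symm v) := by
  simp [Rv, sub_eq_zero, mem_weightedHomogeneousSubmodule]

lemma subst_X_zero (g : Matrix (Fin 2) (Fin 2) k) (i : Fin n) :
    subst k n g (X (i, 0)) = C (g 0 0) * X (i, 0) + C (g 1 0) * X (i, 1) := by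
  simp [subst]

lemma subst_X_one (g : Matrix (Fin 2) (Fin 2) k) (i : Fin n) :
    subst k n g (X (i, 1)) = C (g 0 1) * X (i, 0) + C (g 1 1) * X (i, 1) := by
  simp [subst]

/-- The substitution `y_i ↦ y_i + T x_i` with an indeterminate parameter `T`. -/
noncomputable def shear (k : Type) [Field k] (n : ℕ) :
    PtRing k n →ₐ[k] Polynomial (PtRing k n) :=
  aeval fun p =>
    if p.2 = 0 then Polynomial.C (X (p.1, 0))
    else Polynomial.C (X (p.1, 1)) + Polynomial.X * Polynomial.C (X (p.1, 0))

lemma shear_X_zero (i : Fin n) : shear k n (X (i, 0)) = Polynomial.C (X (i, 0)) := by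
  simp [shear]

lemma shear_X_one (i : Fin n) : shear k n (X (i, 1)) =
    Polynomial.C (X (i, 1)) + Polynomial.X * Polynomial.C (X (i, 0)) := by
  simp [shear]

/-- The elementary matrix giving the substitution `y_i ↦ y_i + t x_i`. -/
def shearMatrix (t : k) : Matrix.SpecialLinearGroup (Fin 2) k :=
  ⟨!![1, t; 0, 1], by simp [Matrix.det_fin_two]⟩

lemma eval_shear (t : k) (f : PtRing k n) :
    (shear k n f).eval (C t) = subst k n (shearMatrix t : Matrix (Fin 2) (Fin 2) k) f := by
  induction f using MvPolynomial.induction_on with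
  | C a =>
    have h1 : shear k n (C a) = Polynomial.C (C a) := (shear k n).commutes a
    have h2 (g : Matrix (Fin 2) (Fin 2) k) : subst k n g (C a) = C a := (subst k n g).commutes a
    rw [h1, h2, Polynomial.eval_C]
  | add p q hp hq => simp [hp, hq]
  | mul_X p i hp =>
    obtain ⟨i, c⟩ := i
    rw [map_mul, map_mul, Polynomial.eval_mul, hp]
    congr 1
    fin_cases c
    · change Polynomial.eval _ (shear k n (X (i, 0))) = subst k n _ (X (i, 0))
      rw [shear_X_zero, subst_X_zero]
      simp [shearMatrix]
    · change Polynomial.eval _ (shear k n (X (i, 1))) = subst k n _ (X (i, 1))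
      rw [shear_X_one, subst_X_one]
      simp [shearMatrix]
      ring

lemma eval_zero_shear (f : PtRing k n) : (shear k n f).eval 0 = f := by
  have h := eval_shear (0 : k) f
  have h1 : ((shearMatrix (0 : k) : Matrix.SpecialLinearGroup (Fin 2) k) :
      Matrix (Fin 2) (Fin 2) k) = 1 := by
    ext i j; fin_cases i <;> fin_cases j <;> simp [shearMatrix]
  have h2 : subst k n 1 = AlgHom.id k _ := by
    ext p : 1
    obtain ⟨i, c⟩ := p
    fin_cases c
    · exact (subst_X_zero _ _).trans (by simp)
    · exact (subst_X_one _ _).trans (by simp)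
  rwa [h1, h2, C_0] at h

lemma raising_mul (f g : PtRing k n) : raising (f * g) = raising f * g + f * raising g := by
  simp only [raising, Derivation.leibniz, smul_eq_mul, Finset.sum_mul, Finset.mul_sum,
    ← Finset.sum_add_distrib]
  exact Finset.sum_congr rfl fun i _ => by ring

lemma derivative_shear (f : PtRing k n) :
    (Polynomial.derivative (shear k n f)).eval 0 = raising f := by
  induction f using MvPolynomial.induction_on with
  | C a =>
    have h1 : shear k n (C a) = Polynomial.C (C a) := (shear k n).commutes a
    simp [h1, raising]
  | add p q hp hq => simp [hp, hq, raising, mul_add, Finset.sum_add_distrib]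
  | mul_X p i hp =>
    have hX : (Polynomial.derivative (shear k n (X i))).eval 0 = raising (X i) := by
      obtain ⟨i, c⟩ := i
      fin_cases c
      · change Polynomial.eval _ (Polynomial.derivative (shear k n (X (i, 0)))) = raising (X (i, 0))
        rw [shear_X_zero]
        simp [raising, pderiv_X]
      · change Polynomial.eval _ (Polynomial.derivative (shear k n (X (i, 1)))) = raising (X (i, 1))
        rw [shear_X_one, raising, Finset.sum_eq_single i]
        · simp
        · intro j _ hj
          simp [pderiv_X, hj.symm]
        · simp
    rw [map_mul, Polynomial.derivative_mul, Polynomial.eval_add, Polynomial.eval_mul,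
      Polynomial.eval_mul, hp, hX, raising_mul, eval_zero_shear, eval_zero_shear]

/-- Invariance under the unipotent one-parameter subgroup, differentiated at the identity. Passing
to an indeterminate parameter uses that `k` is infinite. -/
lemma raising_eq_zero_of_invariant [CharZero k] {f : PtRing k n}
    (h : ∀ g : Matrix.SpecialLinearGroup (Fin 2) k,
      subst k n (g : Matrix (Fin 2) (Fin 2) k) f = f) : raising f = 0 := by
  have hs : shear k n f = Polynomial.C f := by
    apply Polynomial.eq_of_infinite_eval_eq
    refine (Set.infinite_range_of_injective (C_injective (Fin n × Fin 2) k)).mono ?_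
    rintro _ ⟨t, rfl⟩
    simp only [Set.mem_ofPred_eq, Polynomial.eval_C]
    rw [eval_shear, h]
  rw [← derivative_shear, hs]
  simp

/-- The element `diag(2, 1/2)` of the torus. -/
noncomputable def torusMatrix (k : Type) [Field k] [CharZero k] :
    Matrix.SpecialLinearGroup (Fin 2) k :=
  ⟨!![2, 0; 0, 2⁻¹], by simp [Matrix.det_fin_two]⟩

lemma coeff_subst_torus [CharZero k] (f : PtRing k n) (d : Fin n × Fin 2 →₀ ℕ) :
    coeff d (subst k n (torusMatrix k : Matrix (Fin 2) (Fin 2) k) f) =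
      2 ^ (∑ i, d (i, 0)) * (2⁻¹) ^ (∑ i, d (i, 1)) * coeff d f := by
  induction f using MvPolynomial.induction_on' with
  | monomial e a =>
    have hX (p : Fin n × Fin 2) : subst k n (torusMatrix k : Matrix (Fin 2) (Fin 2) k) (X p) =
        C (if p.2 = 0 then 2 else 2⁻¹) * X p := by
      obtain ⟨i, c⟩ := p
      fin_cases c
      · exact (subst_X_zero _ _).trans (by simp [torusMatrix])
      · exact (subst_X_one _ _).trans (by simp [torusMatrix])
    have hmon : subst k n (torusMatrix k : Matrix (Fin 2) (Fin 2) k) (monomial e a) =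
        C (2 ^ (∑ i, e (i, 0)) * (2⁻¹) ^ (∑ i, e (i, 1))) * monomial e a := by
      have hC : subst k n (torusMatrix k : Matrix (Fin 2) (Fin 2) k) (C a) = C a :=
        (subst k n _).commutes a
      rw [monomial_eq, map_mul, hC, Finsupp.prod_fintype _ _ (by simp), map_prod]
      simp only [map_pow, hX, mul_pow, Finset.prod_mul_distrib]
      have : ∏ p : Fin n × Fin 2, (C (if p.2 = 0 then (2 : k) else 2⁻¹) : PtRing k n) ^ e p
          = C (2 ^ (∑ i, e (i, 0)) * (2⁻¹) ^ (∑ i, e (i, 1))) := by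
        simp [Fintype.prod_prod_type, Fin.prod_univ_two, Finset.prod_mul_distrib,
          Finset.prod_pow_eq_pow_sum, -inv_pow]
      rw [this]
      ring
    rw [hmon, coeff_C_mul, coeff_monomial]
    split_ifs with h
    · rw [h]
    · simp
  | add p q hp hq => rw [map_add, coeff_add, coeff_add, hp, hq, mul_add]

/-- A torus-invariant polynomial has equal degrees in the `x_i` and in the `y_i`. -/
lemma colWeight_eq_of_invariant [CharZero k] {f : PtRing k n}
    (h : ∀ g : Matrix.SpecialLinearGroup (Fin 2) k,
      subst k n (g : Matrix (Fin 2) (Fin 2) k) f = f)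
    {d : Fin n × Fin 2 →₀ ℕ} (hd : coeff d f ≠ 0) : ∑ i, d (i, 0) = ∑ i, d (i, 1) := by
  have h1 := coeff_subst_torus f d
  rw [h] at h1
  have h2 : (2 : k) ^ (∑ i, d (i, 0)) * (2⁻¹) ^ (∑ i, d (i, 1)) = 1 :=
    mul_right_cancel₀ hd (by rw [← h1, one_mul])
  rw [inv_pow, mul_inv_eq_one₀ (pow_ne_zero _ two_ne_zero)] at h2
  have h3 : 2 ^ (∑ i, d (i, 0)) = 2 ^ (∑ i, d (i, 1)) := by exact_mod_cast h2
  exact Nat.pow_right_injective le_rfl h3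

/-- The multidegree of a graph monomial. -/
noncomputable def graphDegree (Γ : Multiset (Fin n × Fin n)) : Fin n →₀ ℕ :=
  (Γ.map fun e => Finsupp.single e.1 1 + Finsupp.single e.2 1).sum

lemma bracket_homogeneous (a b : Fin n) :
    (bracket k n a b).IsWeightedHomogeneous (fun p : Fin n × Fin 2 => Finsupp.single p.1 1)
      (Finsupp.single a 1 + Finsupp.single b 1 : Fin n →₀ ℕ) := by
  refine ((isWeightedHomogeneous_X k _ (a, 0)).mul (isWeightedHomogeneous_X k _ (b, 1))).sub ?_
  rw [add_comm]
  exact (isWeightedHomogeneous_X k _ (b, 0)).mul (isWeightedHomogeneous_X k _ (a, 1))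

lemma graphMonomial_homogeneous (Γ : Multiset (Fin n × Fin n)) :
    (graphMonomial k n Γ).IsWeightedHomogeneous (fun p : Fin n × Fin 2 => Finsupp.single p.1 1)
      (graphDegree Γ) := by
  induction Γ using Multiset.induction_on with
  | empty => simpa [graphMonomial, graphDegree] using isWeightedHomogeneous_one k _
  | cons e Γ ih => simpa [graphMonomial, graphDegree] using (bracket_homogeneous e.1 e.2).mul ih

lemma subst_bracket (g : Matrix.SpecialLinearGroup (Fin 2) k) (a b : Fin n) :
    subst k n (g : Matrix (Fin 2) (Fin 2) k) (bracket k n a b) = bracket k n a b := by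
  have hdet : (C (g 0 0 * g 1 1 - g 0 1 * g 1 0) : PtRing k n) = 1 := by
    rw [← Matrix.det_fin_two, g.2, C_1]
  rw [bracket, map_sub, map_mul, map_mul, subst_X_zero, subst_X_one, subst_X_zero, subst_X_one,
    ← one_mul (X (a, 0) * X (b, 1) - X (b, 0) * X (a, 1)), ← hdet]
  simp only [C_sub, C_mul]
  ring

lemma graphMonomial_mem_Rv {v : Fin n → ℕ} (Γ : Multiset (Fin n × Fin n))
    (h : ∀ i, graphDegree Γ i = v i) : graphMonomial k n Γ ∈ Rv k n v := by
  rw [mem_Rv_iff]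
  constructor
  · intro g
    rw [graphMonomial, map_multiset_prod, Multiset.map_map]
    simp only [Function.comp_apply, subst_bracket]
  · have : Finsupp.equivFunOnFinite.symm v = graphDegree Γ := by ext i; simp [h]
    rw [this]
    exact graphMonomial_homogeneous Γ

/-- Projecting an expression in graph monomials to one multidegree keeps the graph monomials of
that multidegree. -/
lemma mem_span_graphDegree {v : Fin n →₀ ℕ} {f : PtRing k n}
    (hv : f.IsWeightedHomogeneous (fun p : Fin n × Fin 2 => Finsupp.single p.1 1) v)
    (hf : f ∈ Submodule.span k (Set.range (graphMonomial k n))) :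
    f ∈ Submodule.span k (graphMonomial k n '' {Γ | graphDegree Γ = v}) := by
  rw [← hv.weightedHomogeneousComponent_same]
  clear hv
  induction hf using Submodule.span_induction with
  | mem x hx =>
    obtain ⟨Γ, rfl⟩ := hx
    by_cases h : graphDegree Γ = v
    · rw [(h ▸ graphMonomial_homogeneous Γ :
        (graphMonomial k n Γ).IsWeightedHomogeneous _ v).weightedHomogeneousComponent_same]
      exact Submodule.subset_span ⟨Γ, h, rfl⟩
    · rw [(graphMonomial_homogeneous Γ).weightedHomogeneousComponent_ne _ (Ne.symm h)]
      exact Submodule.zero_mem _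
  | zero => simp
  | add x y _ _ hx hy => rw [map_add]; exact Submodule.add_mem _ hx hy
  | smul c x _ hx => rw [map_smul]; exact Submodule.smul_mem _ _ hx

/-- First fundamental theorem for `SL₂`, in the multidegrees `(m, …, m)` on an even number of
points: invariants are combinations of graph monomials of `m`-regular graphs. -/
lemma Rv_le_span [CharZero k] {r m : ℕ} {f : PtRing k (r + r)}
    (hf : f ∈ Rv k (r + r) fun _ => m) :
    f ∈ Submodule.span k (graphMonomial k (r + r) '' {Γ | ∀ i, graphDegree Γ i = m}) := by
  obtain ⟨hinv, hhom⟩ := mem_Rv_iff.mp hf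
  have hdeg : ∀ d, coeff d f ≠ 0 → ∑ i, d (i, 0) = r * m ∧ ∑ i, d (i, 1) = r * m := by
    intro d hd
    have h1 := colWeight_eq_of_invariant hinv hd
    have h2 : ∀ i, d (i, 0) + d (i, 1) = m := by
      intro i
      have := congrArg (fun v => v i) (hhom hd)
      simpa [Finsupp.weight_apply, Finsupp.sum_fintype, Fintype.sum_prod_type,
        Finsupp.single_apply, Finset.sum_add_distrib] using this
    have h3 : ∑ i, d (i, 0) + ∑ i, d (i, 1) = (r + r) * m := by
      rw [← Finset.sum_add_distrib]
      simp [h2]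
    constructor <;> linarith
  have key := mem_span_graphMonomial (r * m) f
    (fun d hd => by rw [weight_colWeight]; exact (hdeg d hd).1)
    (fun d hd => by rw [weight_colWeight]; exact (hdeg d hd).2)
    (raising_eq_zero_of_invariant hinv)
  refine Submodule.span_mono (Set.image_mono ?_) (mem_span_graphDegree hhom key)
  intro Γ hΓ i
  simp only [Set.mem_ofPred_eq] at hΓ
  simp [hΓ]

end Invariants

/-! ### Regular graphs and perfect matchings -/

section Graphs

variable {k : Type} [Field k] {n r : ℕ}

lemma graphMonomial_cons (e : Fin n × Fin n) (Γ : Multiset (Fin n × Fin n)) :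
    graphMonomial k n (e ::ₘ Γ) = bracket k n e.1 e.2 * graphMonomial k n Γ := by
  simp [graphMonomial]

lemma graphDegree_cons (e : Fin n × Fin n) (Γ : Multiset (Fin n × Fin n)) :
    graphDegree (e ::ₘ Γ) = Finsupp.single e.1 1 + Finsupp.single e.2 1 + graphDegree Γ := by
  simp [graphDegree]

lemma graphMonomial_add (Γ Δ : Multiset (Fin n × Fin n)) :
    graphMonomial k n (Γ + Δ) = graphMonomial k n Γ * graphMonomial k n Δ := by
  simp [graphMonomial]

lemma graphDegree_add (Γ Δ : Multiset (Fin n × Fin n)) :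
    graphDegree (Γ + Δ) = graphDegree Γ + graphDegree Δ := by
  simp [graphDegree]

/-- The edge has both ends in the first half of the vertices. -/
abbrev InFirst (e : Fin (r + r) × Fin (r + r)) : Prop := (e.1 : ℕ) < r ∧ (e.2 : ℕ) < r

/-- The edge has both ends in the second half of the vertices. -/
abbrev InSecond (e : Fin (r + r) × Fin (r + r)) : Prop := r ≤ (e.1 : ℕ) ∧ r ≤ (e.2 : ℕ)

lemma sum_sign_mul_graphDegree (Γ : Multiset (Fin (r + r) × Fin (r + r))) :
    ∑ i : Fin (r + r), (if (i : ℕ) < r then (1 : ℤ) else -1) * graphDegree Γ i =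
      2 * Γ.countP InFirst - 2 * Γ.countP InSecond := by
  induction Γ using Multiset.induction_on with
  | empty => simp [graphDegree]
  | cons e Γ ih =>
    have hs (a : Fin (r + r)) : ∑ i : Fin (r + r), (if (i : ℕ) < r then (1 : ℤ) else -1) *
        ((Finsupp.single a 1 : Fin (r + r) →₀ ℕ) i : ℕ) = if (a : ℕ) < r then (1 : ℤ) else -1 := by
      rw [Finset.sum_eq_single a]
      · simp
      · intro b _ hb
        simp [hb.symm]
      · simp
    rw [graphDegree_cons]
    simp only [Finsupp.add_apply, Nat.cast_add, mul_add, Finset.sum_add_distrib, hs, ih,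
      Multiset.countP_cons, InFirst, InSecond]
    push_cast
    split_ifs <;> omega

/-- A regular graph has as many edges inside the first half as inside the second half. -/
lemma countP_inFirst_eq {m : ℕ} {Γ : Multiset (Fin (r + r) × Fin (r + r))}
    (h : ∀ i, graphDegree Γ i = m) : Γ.countP InFirst = Γ.countP InSecond := by
  have h1 := sum_sign_mul_graphDegree Γ
  simp only [h, ← Finset.sum_mul, Fin.sum_univ_add] at h1
  simp at h1
  omega

/-- The graph on `r + r` vertices given by a bipartite graph between two copies of `Fin r`, its
edges being directed from the first half to the second half. -/
def bipartite (Δ : Multiset (Fin r × Fin r)) : Multiset (Fin (r + r) × Fin (r + r)) :=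
  Δ.map fun e => (Fin.castAdd r e.1, Fin.natAdd r e.2)

lemma bracket_swap (a b : Fin n) : bracket k n a b = - bracket k n b a := by
  rw [bracket, bracket]; ring

lemma exists_bipartite (k : Type) [Field k] (Γ : Multiset (Fin (r + r) × Fin (r + r))) :
    (∀ e ∈ Γ, ¬ InFirst e ∧ ¬ InSecond e) →
    ∃ (Δ : Multiset (Fin r × Fin r)) (c : k), graphDegree (bipartite Δ) = graphDegree Γ ∧
      graphMonomial k (r + r) Γ = c • graphMonomial k (r + r) (bipartite Δ) := by
  induction Γ using Multiset.induction_on with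
  | empty => exact fun _ => ⟨0, 1, by simp [bipartite]⟩
  | cons e Γ ih =>
    intro h
    obtain ⟨Δ, c, hd, hc⟩ := ih fun e' he' => h e' (Multiset.mem_cons_of_mem he')
    have he := h e (Multiset.mem_cons_self e Γ)
    have hcons (a b : Fin r) : bipartite ((a, b) ::ₘ Δ) =
        (Fin.castAdd r a, Fin.natAdd r b) ::ₘ bipartite Δ := by simp [bipartite]
    obtain ⟨a, b⟩ := e
    induction a using Fin.addCases with
    | left a =>
      induction b using Fin.addCases with
      | left b => simp [InFirst] at he
      | right b =>
        refine ⟨(a, b) ::ₘ Δ, c, ?_, ?_⟩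
        · rw [hcons, graphDegree_cons, graphDegree_cons, hd]
        · rw [hcons, graphMonomial_cons, graphMonomial_cons, hc, mul_smul_comm]
    | right a =>
      induction b using Fin.addCases with
      | left b =>
        refine ⟨(b, a) ::ₘ Δ, -c, ?_, ?_⟩
        · rw [hcons, graphDegree_cons, graphDegree_cons, hd]
          simp only [add_comm (Finsupp.single (Fin.castAdd r b) 1)]
        · rw [hcons, graphMonomial_cons, graphMonomial_cons, hc, mul_smul_comm, bracket_swap]
          simp
      | right b => simp [InSecond] at he

lemma plucker (a b c d : Fin n) : bracket k n a b * bracket k n c d =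
    bracket k n a c * bracket k n b d - bracket k n a d * bracket k n b c := by
  simp only [bracket]; ring

/-- An edge inside the first half is paired with an edge inside the second half, and the Plücker
relation replaces the two by edges between the halves. -/
lemma mem_span_bipartite {m : ℕ} (N : ℕ) : ∀ Γ : Multiset (Fin (r + r) × Fin (r + r)),
    Γ.countP InFirst = N → (∀ i, graphDegree Γ i = m) →
    graphMonomial k (r + r) Γ ∈ Submodule.span k ((fun Δ => graphMonomial k (r + r) (bipartite Δ)) ''
      {Δ | ∀ i, graphDegree (bipartite Δ) i = m}) := by
  induction N with
  | zero =>
    intro Γ hN hm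
    have hN' : Γ.countP InSecond = 0 := by rw [← countP_inFirst_eq hm, hN]
    rw [Multiset.countP_eq_zero] at hN hN'
    obtain ⟨Δ, c, hd, hc⟩ := exists_bipartite k Γ fun e he => ⟨hN e he, hN' e he⟩
    rw [hc]
    exact Submodule.smul_mem _ _ (Submodule.subset_span ⟨Δ, fun i => by rw [hd, hm], rfl⟩)
  | succ N ih =>
    intro Γ hN hm
    have hN' : Γ.countP InSecond = N + 1 := by rw [← countP_inFirst_eq hm, hN]
    obtain ⟨e, he, he1⟩ := Multiset.countP_pos.mp (by omega : 0 < Γ.countP InFirst)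
    obtain ⟨Γ₁, rfl⟩ := Multiset.exists_cons_of_mem he
    obtain ⟨e', he', he1'⟩ := Multiset.countP_pos.mp (by omega : 0 < (e ::ₘ Γ₁).countP InSecond)
    have hne : e' ≠ e := by
      rintro rfl
      exact absurd he1.1 (not_lt.mpr he1'.1)
    obtain ⟨Γ₂, rfl⟩ := Multiset.exists_cons_of_mem ((Multiset.mem_cons.mp he').resolve_left hne)
    obtain ⟨a, b⟩ := e
    obtain ⟨c, d⟩ := e'
    obtain ⟨ha, hb⟩ := he1
    obtain ⟨hc, hd⟩ := he1'
    simp only at ha hb hc hd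
    have hN2 : Γ₂.countP InFirst = N := by
      simp only [Multiset.countP_cons, InFirst] at hN
      rw [if_neg (by omega), if_pos ⟨ha, hb⟩] at hN
      simpa using hN
    have hrw : graphMonomial k (r + r) ((a, b) ::ₘ (c, d) ::ₘ Γ₂) =
        graphMonomial k (r + r) ((a, c) ::ₘ (b, d) ::ₘ Γ₂)
          - graphMonomial k (r + r) ((a, d) ::ₘ (b, c) ::ₘ Γ₂) := by
      simp only [graphMonomial_cons]
      rw [← mul_assoc, plucker]; ring
    rw [hrw]
    have hdeg : ∀ i, graphDegree ((a, b) ::ₘ (c, d) ::ₘ Γ₂) i = m := hm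
    simp only [graphDegree_cons, Finsupp.add_apply] at hdeg
    refine Submodule.sub_mem _ (ih _ ?_ ?_) (ih _ ?_ ?_)
    · simp only [Multiset.countP_cons, InFirst]
      rw [if_neg (by omega), if_neg (by omega)]
      exact hN2
    · intro i
      rw [← hdeg i]
      simp only [graphDegree_cons, Finsupp.add_apply]
      ring
    · simp only [Multiset.countP_cons, InFirst]
      rw [if_neg (by omega), if_neg (by omega)]
      exact hN2
    · intro i
      rw [← hdeg i]
      simp only [graphDegree_cons, Finsupp.add_apply]
      ring

lemma graphDegree_bipartite_left (Δ : Multiset (Fin r × Fin r)) (a : Fin r) :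
    graphDegree (bipartite Δ) (Fin.castAdd r a) = Δ.countP (fun e => e.1 = a) := by
  induction Δ using Multiset.induction_on with
  | empty => simp [graphDegree, bipartite]
  | cons e Δ ih =>
    have h : Fin.natAdd r e.2 ≠ Fin.castAdd r a := fun h => by
      have := congrArg Fin.val h
      simp at this
      omega
    have : bipartite (e ::ₘ Δ) = (Fin.castAdd r e.1, Fin.natAdd r e.2) ::ₘ bipartite Δ := by
      simp [bipartite]
    rw [this, graphDegree_cons, Multiset.countP_cons, ← ih]
    simp [Finsupp.single_apply, h, add_comm, -Fin.natAdd_eq_addNat]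

lemma graphDegree_bipartite_right (Δ : Multiset (Fin r × Fin r)) (b : Fin r) :
    graphDegree (bipartite Δ) (Fin.natAdd r b) = Δ.countP (fun e => e.2 = b) := by
  induction Δ using Multiset.induction_on with
  | empty => simp [graphDegree, bipartite]
  | cons e Δ ih =>
    have h : Fin.castAdd r e.1 ≠ Fin.natAdd r b := fun h => by
      have := congrArg Fin.val h
      simp at this
      omega
    have : bipartite (e ::ₘ Δ) = (Fin.castAdd r e.1, Fin.natAdd r e.2) ::ₘ bipartite Δ := by
      simp [bipartite]
    rw [this, graphDegree_cons, Multiset.countP_cons, ← ih]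
    simp [Finsupp.single_apply, h, add_comm, -Fin.natAdd_eq_addNat]

lemma sum_countP_eq {α β : Type*} [DecidableEq β] (φ : α → β) (S : Finset β) (Δ : Multiset α) :
    ∑ a ∈ S, Δ.countP (fun e => φ e = a) = Δ.countP (fun e => φ e ∈ S) := by
  induction Δ using Multiset.induction_on with
  | empty => simp
  | cons e Δ ih => simp [Multiset.countP_cons, Finset.sum_add_distrib, ih]

/-- A regular bipartite graph of positive degree satisfies Hall's condition. -/
lemma exists_perfect_matching {m : ℕ} (Δ : Multiset (Fin r × Fin r))
    (h : ∀ i, graphDegree (bipartite Δ) i = m + 1) :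
    ∃ σ : Fin r → Fin r, Function.Bijective σ ∧ ∀ a, (a, σ a) ∈ Δ := by
  have hl (a : Fin r) : Δ.countP (fun e => e.1 = a) = m + 1 := by
    rw [← graphDegree_bipartite_left, h]
  have hr (b : Fin r) : Δ.countP (fun e => e.2 = b) = m + 1 := by
    rw [← graphDegree_bipartite_right, h]
  let t : Fin r → Finset (Fin r) := fun a => Finset.univ.filter fun b => (a, b) ∈ Δ
  have hall : ∀ S : Finset (Fin r), S.card ≤ (S.biUnion t).card := by
    intro S
    have h1 := sum_countP_eq Prod.fst S Δ
    have h2 := sum_countP_eq Prod.snd (S.biUnion t) Δ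
    simp only [hl, Finset.sum_const, smul_eq_mul] at h1
    simp only [hr, Finset.sum_const, smul_eq_mul] at h2
    have h3 : Δ.countP (fun e => e.1 ∈ S) =
        Δ.countP (fun e => e.1 ∈ S ∧ e.2 ∈ S.biUnion t) := by
      refine Multiset.countP_congr rfl fun e he => ?_
      simp only [eq_iff_iff, iff_self_and, Finset.mem_biUnion]
      intro heS
      exact ⟨e.1, heS, by simpa [t] using he⟩
    have h4 : Δ.countP (fun e => e.1 ∈ S ∧ e.2 ∈ S.biUnion t) ≤
        Δ.countP (fun e => e.2 ∈ S.biUnion t) := by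
      rw [Multiset.countP_eq_card_filter, Multiset.countP_eq_card_filter]
      exact Multiset.card_le_card (Multiset.monotone_filter_right _ fun e he => he.2)
    rw [← h3, ← h1, ← h2] at h4
    exact Nat.le_of_mul_le_mul_right h4 (Nat.succ_pos m)
  obtain ⟨σ, hσ, hσt⟩ := (Finset.all_card_le_biUnion_card_iff_exists_injective t).mp hall
  exact ⟨σ, Finite.injective_iff_bijective.mp hσ, fun a => by simpa [t] using hσt a⟩

/-- The edges of the matching `a ↦ σ a`. -/
def matching (σ : Fin r → Fin r) : Multiset (Fin r × Fin r) :=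
  (Finset.univ : Finset (Fin r)).val.map fun a => (a, σ a)

lemma graphDegree_matching {σ : Fin r → Fin r} (hσ : Function.Bijective σ) (i : Fin (r + r)) :
    graphDegree (bipartite (matching σ)) i = 1 := by
  induction i using Fin.addCases with
  | left a =>
    rw [graphDegree_bipartite_left, matching, Multiset.countP_map, ← Finset.filter_val,
      Finset.card_val, Finset.filter_eq' Finset.univ a]
    simp
  | right b =>
    obtain ⟨a, rfl⟩ := hσ.2 b
    rw [graphDegree_bipartite_right, matching, Multiset.countP_map, ← Finset.filter_val,
      Finset.card_val]
    simp only [hσ.1.eq_iff]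
    rw [Finset.filter_eq' Finset.univ a]
    simp

/-- Regular bipartite graphs decompose into perfect matchings. -/
lemma bipartite_eq_prod (m : ℕ) : ∀ Δ : Multiset (Fin r × Fin r),
    (∀ i, graphDegree (bipartite Δ) i = m) → ∃ g : Fin m → PtRing k (r + r),
      (∀ j, g j ∈ Rv k (r + r) fun _ => 1) ∧
        graphMonomial k (r + r) (bipartite Δ) = ∏ j, g j := by
  induction m with
  | zero =>
    intro Δ h
    have : Δ = 0 := by
      refine Multiset.eq_zero_of_forall_notMem fun e he => ?_
      have h1 := h (Fin.castAdd r e.1)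
      rw [graphDegree_bipartite_left, Multiset.countP_eq_zero] at h1
      exact h1 e he rfl
    refine ⟨Fin.elim0, fun j => j.elim0, ?_⟩
    simp [this, bipartite, graphMonomial]
  | succ m ih =>
    intro Δ h
    obtain ⟨σ, hσ, hmem⟩ := exists_perfect_matching Δ h
    have hle : matching σ ≤ Δ := by
      refine (Multiset.le_iff_subset ?_).mpr ?_
      · exact Multiset.Nodup.map (fun a b hab => (Prod.ext_iff.mp hab).1) Finset.univ.nodup
      · intro e he
        obtain ⟨a, -, rfl⟩ := Multiset.mem_map.mp he
        exact hmem a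
    obtain ⟨Δ', rfl⟩ := Multiset.le_iff_exists_add.mp hle
    have hadd : bipartite (matching σ + Δ') = bipartite (matching σ) + bipartite Δ' := by
      simp [bipartite]
    obtain ⟨g, hg, hprod⟩ := ih Δ' fun i => by
      have := h i
      rw [hadd, graphDegree_add, Finsupp.add_apply, graphDegree_matching hσ] at this
      omega
    refine ⟨Fin.cons (graphMonomial k (r + r) (bipartite (matching σ))) g, ?_, ?_⟩
    · intro j
      induction j using Fin.cases with
      | zero => exact graphMonomial_mem_Rv _ (graphDegree_matching hσ)
      | succ j => exact hg j
    · rw [hadd, graphMonomial_add, hprod, Fin.prod_univ_succ]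
      simp

end Graphs

/-- Kempe's theorem, unit weight case: for `n` even, every invariant of multidegree
`(m,…,m)` is a linear combination of products of `m` invariants of multidegree `(1,…,1)`. -/
theorem stmt4 (k : Type) [Field k] [CharZero k] (n : ℕ) (hn : Even n)
    (m : ℕ) (hm : 1 ≤ m) (f : PtRing k n) (hf : f ∈ Rv k n fun _ => m) :
    f ∈ Submodule.span k
      {p : PtRing k n | ∃ g : Fin m → PtRing k n,
        (∀ j, g j ∈ Rv k n fun _ => 1) ∧ p = ∏ j, g j} := by
  obtain ⟨r, rfl⟩ := hn
  refine Submodule.span_le.mpr ?_ (Rv_le_span hf)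
  rintro _ ⟨Γ, hΓ, rfl⟩
  refine Submodule.span_mono ?_ (mem_span_bipartite _ Γ rfl hΓ)
  rintro _ ⟨Δ, hΔ, rfl⟩
  exact bipartite_eq_prod m Δ hΔ
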